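/- Let k ≥ 1 be an integer, Ψ : (0,∞) → (0,∞) admissible of degree k (i.e. Ψ(x) = o(x^{−2k+1}) as x → ∞ and Ψ(x)/Ψ(y) ≥ (y/x)^{k−1} for all sufficiently large x ≤ y), and define Ψ_j(x) := Ψ(x^{1/j})·x^{(j−1)/j} for 1 ≤ j ≤ k. Then for every non-empty open interval I ⊆ (−1/2, 1/2), the set ⋂_{1≤j≤k} (𝒦_j(Ψ_j) \ ⋃_{0<c<1} 𝒦_j(cΨ_j)) ∩ I is uncountable. -/

import Mathlib

open Filter Set

/-- `Kk k Ψ` is the set of real `ζ` not algebraic of degree at most `k` such that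
`max_{1≤j≤k} |q·ζ^j - p_j| ≤ Ψ q` holds for infinitely many tuples
`(q, p₁, …, p_k) ∈ ℕ × ℤ^k` with `q ≥ 1`. -/
def Kk (k : ℕ) (Ψ : ℕ → ℝ) : Set ℝ :=
  {ζ : ℝ | (∀ P : Polynomial ℤ, P ≠ 0 → P.natDegree ≤ k → (Polynomial.aeval ζ) P ≠ 0) ∧
    {qp : ℕ × (Fin k → ℤ) | 1 ≤ qp.1 ∧
      ∀ j : Fin k, |(qp.1 : ℝ) * ζ ^ ((j : ℕ) + 1) - (qp.2 j : ℝ)| ≤ Ψ qp.1}.Infinite}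

/-- `psiJ Ψ j x = Ψ(x^{1/j}) · x^{(j-1)/j}`. -/
noncomputable def psiJ (Ψ : ℝ → ℝ) (j : ℕ) (x : ℝ) : ℝ :=
  Ψ (x ^ ((1 : ℝ) / (j : ℝ))) * x ^ (((j : ℝ) - 1) / (j : ℝ))

lemma exists_start (a b : ℝ) (hab : a < b) : ∃ p0 q0 p1 q1 : ℤ, 0 < q0 ∧ q0 < q1 ∧
    |p1 * q0 - p0 * q1| = 1 ∧ (p0 / q0 : ℝ) ∈ Ioo a b ∧ (p1 / q1 : ℝ) ∈ Ioo a b := by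
  obtain ⟨r, hr1, hr2⟩ := exists_rat_btwn hab
  have hcop : IsCoprime r.num (r.den : ℤ) := by
    rw [Int.isCoprime_iff_gcd_eq_one]
    exact r.reduced
  obtain ⟨u, v, huv⟩ := hcop
  -- u * num + v * den = 1
  have hq : (0 : ℤ) < r.den := by exact_mod_cast r.den_pos
  have hqR : (0 : ℝ) < (r.den : ℝ) := by exact_mod_cast r.den_pos
  have hrr : (r : ℝ) = (r.num : ℝ) / (r.den : ℝ) := Rat.cast_def r
  obtain ⟨T, hT⟩ := exists_nat_gt (1 / (b - r) : ℝ)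
  set t : ℤ := |u| + r.den + 1 + T with ht
  have hq1 : (r.den : ℤ) + T < -u + t * r.den := by
    have h1 : u ≤ |u| := le_abs_self u
    have h0 : 0 ≤ |u| := abs_nonneg u
    have h2 : t ≤ t * r.den := by
      apply le_mul_of_one_le_right
      · positivity
      · omega
    omega
  have hdet : (v + t * r.num) * (r.den : ℤ) - r.num * (-u + t * r.den) = 1 := by
    linear_combination huv
  have hq1' : (0 : ℤ) < -u + t * r.den := by omega
  refine ⟨r.num, r.den, v + t * r.num, -u + t * r.den, hq, by omega, ?_, ?_, ?_⟩
  · rw [hdet]; rfl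
  · have : ((r.num : ℝ) / ((r.den : ℤ) : ℝ)) = r := by rw [hrr]; push_cast; rfl
    rw [this]; exact ⟨hr1, hr2⟩
  · generalize hq1d : -u + t * r.den = q1 at *
    generalize hp1d : v + t * r.num = p1 at *
    have hq1R : (0 : ℝ) < q1 := by exact_mod_cast hq1'
    have hdetR : (p1 : ℝ) * r.den - r.num * q1 = 1 := by exact_mod_cast hdet
    have hx : (p1 : ℝ) / q1 = r + 1 / (r.den * q1) := by
      rw [hrr]; field_simp; linarith
    rw [hx]
    have hp : (0 : ℝ) < 1 / (r.den * q1) := by positivity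
    refine ⟨by linarith, ?_⟩
    have hbr : (0 : ℝ) < b - r := by linarith
    have hTq : (T : ℝ) < q1 := by
      have : (T : ℤ) < q1 := by omega
      exact_mod_cast this
    have h1 : (1 : ℝ) ≤ r.den := by exact_mod_cast r.den_pos
    have : 1 / (r.den * q1 : ℝ) < b - r := by
      rw [div_lt_iff₀ (by positivity)]
      rw [div_lt_iff₀ hbr] at hT
      have : (T : ℝ) < r.den * q1 := by nlinarith
      nlinarith
    linarith

lemma exists_seq (p0 q0 p1 q1 : ℤ) (g : ℕ → ℤ → ℤ → ℤ → ℤ) : ∃ p q : ℕ → ℤ,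
    p 0 = p0 ∧ q 0 = q0 ∧ p 1 = p1 ∧ q 1 = q1 ∧
    (∀ n, p (n + 2) = g n (p (n + 1)) (q (n + 1)) (q n) * p (n + 1) + p n) ∧
    (∀ n, q (n + 2) = g n (p (n + 1)) (q (n + 1)) (q n) * q (n + 1) + q n) := by
  let s : ℕ → ℤ × ℤ × ℤ × ℤ := fun n => Nat.rec (p0, q0, p1, q1)
    (fun n s => (s.2.2.1, s.2.2.2, g n s.2.2.1 s.2.2.2 s.2.1 * s.2.2.1 + s.1,
      g n s.2.2.1 s.2.2.2 s.2.1 * s.2.2.2 + s.2.1)) n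
  exact ⟨fun n => (s n).1, fun n => (s n).2.1, rfl, rfl, rfl, rfl, fun n => rfl, fun n => rfl⟩

set_option maxHeartbeats 2000000 in
/-- continued fraction like construction -/
lemma core (Ψ : ℝ → ℝ) (hpos : ∀ x : ℝ, 0 < x → 0 < Ψ x)
    (hdec : Tendsto (fun x : ℝ => x * Ψ x) atTop (nhds 0))
    (hmono : ∃ X : ℝ, 0 < X ∧ ∀ x y : ℝ, X ≤ x → x ≤ y → Ψ y ≤ Ψ x)
    (a b : ℝ) (hab : a < b) (f : ℕ → ℝ) :
    ∃ ζ ∈ Ioo a b, (∀ n, ζ ≠ f n) ∧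
      (∀ N : ℕ, ∃ (q : ℕ) (p : ℤ), N < q ∧ (p / q : ℝ) ∈ Ioo a b ∧ |q * ζ - p| ≤ Ψ q) ∧
      (∀ c : ℝ, 0 < c → c < 1 → ∃ N : ℕ, ∀ q : ℕ, N ≤ q → ∀ p : ℤ, c * Ψ q < |q * ζ - p|) := by
  classical
  obtain ⟨p0, q0, p1, q1, hq0, hq01, hdet0, hx0, hx1⟩ := exists_start a b hab
  let A0 : ℤ → ℤ := fun q => ⌈1 / ((q : ℝ) * Ψ q)⌉ + 1
  let g : ℕ → ℤ → ℤ → ℤ → ℤ := fun n p q q' =>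
    if |f n - p / q| > 1 / ((q : ℝ) * ((A0 q + 2) * q + q')) then A0 q + 2 else A0 q
  obtain ⟨p, q, hp0, hq0', hp1, hq1', hp, hq⟩ := exists_seq p0 q0 p1 q1 g
  let A : ℕ → ℤ := fun n => g n (p (n + 1)) (q (n + 1)) (q n)
  have hp' : ∀ n, p (n + 2) = A n * p (n + 1) + p n := hp
  have hq' : ∀ n, q (n + 2) = A n * q (n + 1) + q n := hq
  have hA0 : ∀ z : ℤ, 0 < z → 2 ≤ A0 z := by
    intro z hz
    have hz' : (0 : ℝ) < z := by exact_mod_cast hz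
    have h1 : 0 < ⌈1 / ((z : ℝ) * Ψ z)⌉ := by
      rw [Int.ceil_pos]
      have := hpos z hz'
      positivity
    simp only [A0]; omega
  have hAc : ∀ n, (A n = A0 (q (n + 1)) + 2 ∧
      |f n - p (n + 1) / q (n + 1)| >
        1 / ((q (n + 1) : ℝ) * ((A0 (q (n + 1)) + 2) * q (n + 1) + q n))) ∨
      (A n = A0 (q (n + 1)) ∧
      |f n - p (n + 1) / q (n + 1)| ≤
        1 / ((q (n + 1) : ℝ) * ((A0 (q (n + 1)) + 2) * q (n + 1) + q n))) := by
    intro n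
    by_cases h : |f n - p (n + 1) / q (n + 1)| >
        1 / ((q (n + 1) : ℝ) * ((A0 (q (n + 1)) + 2) * q (n + 1) + q n))
    · left; exact ⟨if_pos h, h⟩
    · right; exact ⟨if_neg h, not_lt.1 h⟩
  have hqq : ∀ n, 0 < q n ∧ q n < q (n + 1) := by
    intro n
    induction n with
    | zero => rw [hq0', hq1']; exact ⟨hq0, hq01⟩
    | succ n ih =>
      have h1 : 0 < q (n + 1) := by omega
      refine ⟨h1, ?_⟩
      rw [hq' n]
      have h2 : 2 ≤ A n := by
        have := hA0 _ h1
        rcases hAc n with h | h <;> omega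
      nlinarith
  have hqpos : ∀ n, 0 < q n := fun n => (hqq n).1
  have hqlt : ∀ n, q n < q (n + 1) := fun n => (hqq n).2
  have hqR : ∀ n, (0 : ℝ) < q n := fun n => by exact_mod_cast hqpos n
  have hqltR : ∀ n, (q n : ℝ) < q (n + 1) := fun n => by exact_mod_cast hqlt n
  have hA2 : ∀ n, 2 ≤ A n := by
    intro n
    have := hA0 _ (hqpos (n + 1))
    rcases hAc n with h | h <;> omega
  have hqn : ∀ n : ℕ, (n : ℤ) < q n := by
    intro n
    induction n with
    | zero => exact_mod_cast hqpos 0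
    | succ n ih => have := hqlt n; push_cast; omega
  have hdet : ∀ n, |p (n + 1) * q n - p n * q (n + 1)| = 1 := by
    intro n
    induction n with
    | zero => rw [hq0', hp0, hq1', hp1]; exact hdet0
    | succ n ih =>
      rw [hp' n, hq' n, ← ih, ← abs_neg]
      congr 1; ring
  have hqmono : StrictMono q := strictMono_nat_of_lt_succ hqlt
  let x : ℕ → ℝ := fun n => p n / q n
  have hxd : ∀ n, |x (n + 1) - x n| = 1 / ((q n : ℝ) * q (n + 1)) := by
    intro n
    have h1 := hqR n
    have h2 := hqR (n + 1)
    have h3 : |(p (n + 1) * q n - p n * q (n + 1) : ℝ)| = 1 := by exact_mod_cast hdet n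
    have : x (n + 1) - x n = (p (n + 1) * q n - p n * q (n + 1)) / (q n * q (n + 1)) := by
      simp only [x]; field_simp
    rw [this, abs_div, h3, abs_of_pos (by positivity)]
  let S : ℕ → Set ℝ := fun n => segment ℝ (x n) (x (n + 1))
  have hmem : ∀ n, x (n + 2) ∈ S n := by
    intro n
    have h1 := hqR n
    have h2 := hqR (n + 1)
    have h3 := hqR (n + 2)
    have hA : (2 : ℝ) ≤ A n := by exact_mod_cast hA2 n
    have e1 : (q (n + 2) : ℝ) = A n * q (n + 1) + q n := by exact_mod_cast hq' n
    have e2 : (p (n + 2) : ℝ) = A n * p (n + 1) + p n := by exact_mod_cast hp' n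
    refine ⟨q n / q (n + 2), A n * q (n + 1) / q (n + 2), by positivity, by positivity, ?_, ?_⟩
    · rw [← add_div, div_eq_one_iff_eq h3.ne', e1]; ring
    · simp only [x, smul_eq_mul]
      rw [e2]; field_simp; ring
  have hSsub : ∀ n, S (n + 1) ⊆ S n := fun n =>
    (convex_segment _ _).segment_subset (right_mem_segment ℝ _ _) (hmem n)
  have hScomp : ∀ n, IsCompact (S n) := by
    intro n
    simp only [S, segment_eq_uIcc]
    exact isCompact_uIcc
  obtain ⟨ζ, hζ⟩ := IsCompact.nonempty_iInter_of_sequence_nonempty_isCompact_isClosed S hSsub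
    (fun n => ⟨_, left_mem_segment ℝ _ _⟩) (hScomp 0) (fun n => (hScomp n).isClosed)
  have hζS : ∀ n, ζ ∈ S n := fun n => mem_iInter.1 hζ n
  have hSant : Antitone S := antitone_nat_of_succ_le hSsub
  have hS0 : S 0 ⊆ Ioo a b := by
    apply (convex_Ioo a b).segment_subset
    · simp only [x, hp0, hq0']; exact hx0
    · simp only [x, hp1, hq1']; exact hx1
  have hup : ∀ n, |ζ - x n| ≤ 1 / ((q n : ℝ) * q (n + 1)) := by
    intro n
    rw [← hxd n]
    have := hζS n
    simp only [S, segment_eq_uIcc] at this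
    exact abs_sub_left_of_mem_uIcc this
  have hlow : ∀ n, 1 / ((q n : ℝ) * q (n + 1)) - 1 / ((q (n + 1) : ℝ) * q (n + 2)) ≤ |ζ - x n| := by
    intro n
    rw [← hxd n]
    have h1 := hup (n + 1)
    have h2 : |x (n + 1) - x n| ≤ |x (n + 1) - ζ| + |ζ - x n| := abs_sub_le _ _ _
    rw [abs_sub_comm (x (n + 1)) ζ] at h2
    linarith
  have hxm : ∀ n, (q n : ℝ) * ζ - p n = q n * (ζ - x n) := by
    intro n
    have := hqR n
    simp only [x]; field_simp
  have hupq : ∀ n, |(q n : ℝ) * ζ - p n| ≤ 1 / q (n + 1) := by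
    intro n
    have h1 := hqR n
    have h2 := hqR (n + 1)
    rw [hxm, abs_mul, abs_of_pos h1]
    calc (q n : ℝ) * |ζ - x n| ≤ q n * (1 / ((q n : ℝ) * q (n + 1))) := by
          gcongr; exact hup n
      _ = 1 / q (n + 1) := by field_simp
  -- bounds on A
  have hAlo : ∀ n, 1 ≤ A n * (q (n + 1) * Ψ (q (n + 1))) := by
    intro n
    have h1 := hqR (n + 1)
    have h2 := hpos _ h1
    have h3 : (A0 (q (n + 1)) : ℝ) ≤ A n := by
      have : A0 (q (n + 1)) ≤ A n := by rcases hAc n with h | h <;> omega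
      exact_mod_cast this
    have h4 : 1 / ((q (n + 1) : ℝ) * Ψ (q (n + 1))) ≤ A n := by
      have := Int.le_ceil (1 / ((q (n + 1) : ℝ) * Ψ (q (n + 1))))
      simp only [A0] at h3
      push_cast at h3
      linarith
    rwa [div_le_iff₀ (by positivity)] at h4
  have hAhi : ∀ n, A n * (q (n + 1) * Ψ (q (n + 1))) ≤ 1 + 4 * (q (n + 1) * Ψ (q (n + 1))) := by
    intro n
    have h1 := hqR (n + 1)
    have h2 := hpos _ h1
    have h3 : (A n : ℝ) ≤ A0 (q (n + 1)) + 2 := by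
      have : A n ≤ A0 (q (n + 1)) + 2 := by rcases hAc n with h | h <;> omega
      exact_mod_cast this
    have h4 : (A n : ℝ) ≤ 1 / ((q (n + 1) : ℝ) * Ψ (q (n + 1))) + 4 := by
      have := Int.ceil_lt_add_one (1 / ((q (n + 1) : ℝ) * Ψ (q (n + 1))))
      simp only [A0] at h3
      push_cast at h3
      linarith
    have hpp : 0 < (q (n + 1) : ℝ) * Ψ (q (n + 1)) := by positivity
    calc _ ≤ (1 / ((q (n + 1) : ℝ) * Ψ (q (n + 1))) + 4) * (q (n + 1) * Ψ (q (n + 1))) := by gcongr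
      _ = _ := by field_simp
  have hqe : ∀ n, (q (n + 2) : ℝ) = A n * q (n + 1) + q n := fun n => by exact_mod_cast hq' n
  refine ⟨ζ, hS0 (hζS 0), ?_, ?_, ?_⟩
  · intro n hfn
    have h1 := hqR n
    have h2 := hqR (n + 1)
    have h3 := hqR (n + 2)
    have h03 : (2 : ℝ) ≤ A0 (q (n + 1)) := by exact_mod_cast hA0 _ (hqpos (n + 1))
    rcases hAc n with ⟨h, h'⟩ | ⟨h, h'⟩
    · rw [← hfn] at h'
      have hu := hup (n + 1)
      have : (q (n + 1 + 1) : ℝ) = (A0 (q (n + 1)) + 2) * q (n + 1) + q n := by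
        rw [show n + 1 + 1 = n + 2 from rfl, hqe n, h]; push_cast; ring
      rw [this] at hu
      exact absurd h' (not_lt.2 hu)
    · rw [← hfn] at h'
      have hl := hlow (n + 1)
      have e2 : (q (n + 1 + 1) : ℝ) = A0 (q (n + 1)) * q (n + 1) + q n := by
        rw [show n + 1 + 1 = n + 2 from rfl, hqe n, h]
      have e3 : (q (n + 1 + 1) : ℝ) + q (n + 1) ≤ q (n + 1 + 2) := by
        have := hqe (n + 1)
        have hA : (2 : ℝ) ≤ A (n + 1) := by exact_mod_cast hA2 (n + 1)
        have h3' := hqR (n + 1 + 1)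
        rw [this]; nlinarith
      have h3' := hqR (n + 1 + 1)
      have e4 : (A0 (q (n + 1)) + 2) * (q (n + 1) : ℝ) + q n = q (n + 1 + 1) + 2 * q (n + 1) := by
        rw [e2]; ring
      rw [e4] at h'
      change |ζ - x (n + 1)| ≤ _ at h'
      generalize (q (n + 1 + 1) : ℝ) = Y at *
      generalize (q (n + 1) : ℝ) = Z at *
      generalize (q (n + 1 + 2) : ℝ) = W at *
      have k1 : 1 / (Y * W) ≤ 1 / (Y * (Y + Z)) := by gcongr
      have k2 : 1 / (Z * Y) - 1 / (Y * (Y + Z)) = 1 / (Z * (Y + Z)) := by field_simp; ring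
      have k3 : 1 / (Z * (Y + 2 * Z)) < 1 / (Z * (Y + Z)) := by
        apply one_div_lt_one_div_of_lt
        · positivity
        · nlinarith
      linarith
  · intro N
    refine ⟨(q (N + 1)).toNat, p (N + 1), ?_, ?_, ?_⟩
    · have := hqn (N + 1); push_cast at this; omega
    · have : (((q (N + 1)).toNat : ℕ) : ℝ) = q (N + 1) := by
        exact_mod_cast Int.toNat_of_nonneg (hqpos (N + 1)).le
      rw [this]
      exact hS0 (hSant (Nat.zero_le _) (left_mem_segment ℝ (x (N + 1)) (x (N + 1 + 1))))
    · have : (((q (N + 1)).toNat : ℕ) : ℝ) = q (N + 1) := by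
        exact_mod_cast Int.toNat_of_nonneg (hqpos (N + 1)).le
      rw [this]
      refine (hupq (N + 1)).trans ?_
      have h1 := hqR (N + 1)
      have h0 := hqR N
      have h2 := hpos _ h1
      rw [div_le_iff₀ (hqR _), show N + 1 + 1 = N + 2 from rfl, hqe N]
      have := hAlo N
      nlinarith [mul_pos h2 h0]
  · intro c hc0 hc1
    obtain ⟨X, hX0, hX⟩ := hmono
    have hδ : 0 < (1 - c) / 6 := by linarith
    obtain ⟨Y, hY⟩ := eventually_atTop.1 (hdec.eventually (gt_mem_nhds hδ))
    obtain ⟨K, hK⟩ := exists_nat_gt (max X Y)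
    have hKX : X < K := lt_of_le_of_lt (le_max_left _ _) hK
    have hKY : Y < K := lt_of_le_of_lt (le_max_right _ _) hK
    refine ⟨(q (K + 2)).toNat, ?_⟩
    intro Q hQ P
    have hQ' : q (K + 2) ≤ Q := by omega
    have hex : ∃ n, 2 * (Q : ℤ) ≤ q (n + 1) := ⟨2 * Q, by have := hqn (2 * Q + 1); push_cast at this; omega⟩
    obtain ⟨n, hn1, hn2⟩ : ∃ n, 2 * (Q : ℤ) ≤ q (n + 1) ∧ ∀ m < n, q (m + 1) < 2 * (Q : ℤ) := by
      refine ⟨Nat.find hex, Nat.find_spec hex, fun m hm => ?_⟩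
      have := Nat.find_min hex hm
      omega
    have hnK : K + 1 < n := by
      by_contra hcon
      have : q (n + 1) ≤ q (K + 2) := hqmono.monotone (by omega)
      have := hqpos (K + 2)
      omega
    obtain ⟨m, rfl⟩ : ∃ m, n = m + 1 := ⟨n - 1, by omega⟩
    have hm2 := hn2 m (by omega)
    have hQR : (0 : ℝ) < Q := by
      have := hqpos (K + 2)
      have : (0 : ℤ) < Q := by omega
      exact_mod_cast this
    have hKQ : (K : ℝ) < Q := by
      have := hqn (K + 2)
      have : (K : ℤ) < Q := by push_cast at this; omega
      exact_mod_cast this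
    have hKq : (K : ℝ) < q (m + 1) := by
      have := hqn (m + 1)
      have : (K : ℤ) < q (m + 1) := by push_cast at this; omega
      exact_mod_cast this
    have hn1R : 2 * (Q : ℝ) ≤ q (m + 1 + 1) := by exact_mod_cast hn1
    have hm2R : (q (m + 1) : ℝ) < 2 * Q := by exact_mod_cast hm2
    have hq1R := hqR (m + 1)
    have hq2R := hqR (m + 1 + 1)
    have hq3R := hqR (m + 1 + 2)
    by_cases hPQ : P * q (m + 1) = p (m + 1) * Q
    · have hcop : IsCoprime (q (m + 1)) (p (m + 1)) := by
        have h := hdet (m + 1)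
        rcases abs_eq (zero_le_one' ℤ) |>.1 h with h | h
        · exact ⟨p (m + 1 + 1), - q (m + 1 + 1), by linarith⟩
        · exact ⟨-p (m + 1 + 1), q (m + 1 + 1), by linarith⟩
      have hdvd : q (m + 1) ∣ Q := hcop.dvd_of_dvd_mul_left ⟨P, by linarith⟩
      obtain ⟨M, hM⟩ := hdvd
      have hM1 : 1 ≤ M := by
        have h1 : (0 : ℤ) < Q := by exact_mod_cast hQR
        rw [hM] at h1
        have := pos_of_mul_pos_right h1 (hqpos (m + 1)).le
        omega
      have hP : P = M * p (m + 1) := by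
        have : q (m + 1) * (P - M * p (m + 1)) = 0 := by rw [hM] at hPQ; linear_combination hPQ
        rcases mul_eq_zero.1 this with h | h
        · exact absurd h (hqpos _).ne'
        · linarith
      have hMR : (1 : ℝ) ≤ M := by exact_mod_cast hM1
      have hQe : (Q : ℝ) = q (m + 1) * M := by exact_mod_cast hM
      have hPe : (P : ℝ) = M * p (m + 1) := by exact_mod_cast hP
      have e1 : (Q : ℝ) * ζ - P = M * (q (m + 1) * ζ - p (m + 1)) := by rw [hQe, hPe]; ring
      have hΨ : Ψ Q ≤ Ψ (q (m + 1)) := by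
        apply hX
        · linarith
        · rw [hQe]; nlinarith
      have hε := hY (q (m + 1)) (by linarith)
      have hψ := hpos _ hq1R
      have hlo := hlow (m + 1)
      have key : c * Ψ (q (m + 1)) < |q (m + 1) * ζ - p (m + 1)| := by
        rw [hxm, abs_mul, abs_of_pos hq1R]
        refine lt_of_lt_of_le ?_ (mul_le_mul_of_nonneg_left hlo hq1R.le)
        have hA1 := hAlo m
        have hA3 := hAhi m
        have e2 : (q (m + 1 + 1) : ℝ) = A m * q (m + 1) + q m := hqe m
        have e3 : (q (m + 1 + 2) : ℝ) ≥ 2 * q (m + 1 + 1) := by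
          rw [hqe (m + 1)]
          have hA : (2 : ℝ) ≤ A (m + 1) := by exact_mod_cast hA2 (m + 1)
          have := hqR (m + 1)
          nlinarith
        have hqm := hqR m
        have hqm' := hqltR m
        generalize (q (m + 1 + 2) : ℝ) = W at *
        generalize (q (m + 1 + 1) : ℝ) = Z at *
        generalize (q (m + 1) : ℝ) = z at *
        generalize (q m : ℝ) = w at *
        generalize Ψ z = ψ at *
        have f1 : Z * ψ ≤ 1 + 5 * (z * ψ) := by
          rw [e2]
          have := mul_le_mul_of_nonneg_right hqm'.le hψ.le
          linarith
        have f2 : 1 ≤ Z * ψ := by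
          rw [e2]
          have := mul_pos hqm hψ
          linarith
        have f3 : z ≤ (z * ψ) * W := by
          have g1 : 1 ≤ ψ * W := by
            have := mul_le_mul_of_nonneg_left e3 hψ.le
            linarith
          have := mul_le_mul_of_nonneg_left g1 hq1R.le
          linarith
        have f4 : z * (1 / (z * Z) - 1 / (Z * W)) = (1 - z / W) / Z := by field_simp
        rw [f4, lt_div_iff₀ hq2R]
        have f5 : z / W ≤ z * ψ := by rw [div_le_iff₀ hq3R]; exact f3
        have f6 := mul_le_mul_of_nonneg_left f1 hc0.le
        have f7 := mul_le_mul_of_nonneg_right hc1.le (mul_pos hq1R hψ).le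
        linarith
      rw [e1, abs_mul, abs_of_pos (by linarith)]
      have : 0 ≤ |q (m + 1) * ζ - p (m + 1)| := abs_nonneg _
      nlinarith
    · have h1 : (1 : ℝ) ≤ |(P * q (m + 1) - p (m + 1) * Q : ℝ)| := by
        have : (1 : ℤ) ≤ |P * q (m + 1) - p (m + 1) * Q| := Int.one_le_abs (sub_ne_zero.2 hPQ)
        exact_mod_cast this
      have h2 := hupq (m + 1)
      have h3 : (P * q (m + 1) - p (m + 1) * Q : ℝ) =
        Q * (q (m + 1) * ζ - p (m + 1)) - q (m + 1) * (Q * ζ - P) := by ring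
      rw [h3] at h1
      have h4 := h1.trans (abs_sub _ _)
      rw [abs_mul, abs_mul, abs_of_pos hQR, abs_of_pos hq1R] at h4
      have h5 : (Q : ℝ) * |q (m + 1) * ζ - p (m + 1)| ≤ 1 / 2 := by
        calc _ ≤ (Q : ℝ) * (1 / q (m + 1 + 1)) := by gcongr
          _ ≤ 1 / 2 := by rw [mul_one_div, div_le_iff₀ hq2R]; linarith
      have hε := hY Q (by linarith)
      have hψ := hpos _ hQR
      have h6 : 1 / 4 ≤ (Q : ℝ) * |Q * ζ - P| := by
        have : 0 ≤ |Q * ζ - P| := abs_nonneg _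
        nlinarith
      have h7 : Q * (c * Ψ Q) < Q * |Q * ζ - P| := by nlinarith [mul_pos hQR hψ]
      exact lt_of_mul_lt_mul_left h7 hQR.le

lemma pow_sub_half (x y : ℝ) (hx : |x| ≤ 1 / 2) (hy : |y| ≤ 1 / 2) (i : ℕ) :
    |x ^ (i + 1) - y ^ (i + 1)| ≤ |x - y| := by
  induction i with
  | zero => simp
  | succ i ih =>
    have e : x ^ (i + 1 + 1) - y ^ (i + 1 + 1) = x * (x ^ (i + 1) - y ^ (i + 1)) +
      y ^ (i + 1) * (x - y) := by ring
    have h1 : |y ^ (i + 1)| ≤ 1 / 2 := by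
      rw [abs_pow]
      calc |y| ^ (i + 1) ≤ |y| := pow_le_of_le_one (abs_nonneg _) (by linarith) (by omega)
        _ ≤ _ := hy
    rw [e]
    calc _ ≤ |x| * |x ^ (i + 1) - y ^ (i + 1)| + |y ^ (i + 1)| * |x - y| := by
          rw [← abs_mul, ← abs_mul]; exact abs_add_le _ _
      _ ≤ 1 / 2 * |x - y| + 1 / 2 * |x - y| := by gcongr
      _ = _ := by ring

lemma pow_sub_one_bd (x y : ℝ) (hx : |x| ≤ 1) (hy : |y| ≤ 1) (i : ℕ) :
    |x ^ i - y ^ i| ≤ i * |x - y| := by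
  induction i with
  | zero => simp
  | succ i ih =>
    have e : x ^ (i + 1) - y ^ (i + 1) = x * (x ^ i - y ^ i) + y ^ i * (x - y) := by ring
    have h1 : |y ^ i| ≤ 1 := by
      rw [abs_pow]; exact pow_le_one₀ (abs_nonneg _) hy
    rw [e]
    calc _ ≤ |x| * |x ^ i - y ^ i| + |y ^ i| * |x - y| := by
          rw [← abs_mul, ← abs_mul]; exact abs_add_le _ _
      _ ≤ 1 * (i * |x - y|) + 1 * |x - y| := by gcongr
      _ = _ := by push_cast; ring

lemma psiJ_eq (Ψ : ℝ → ℝ) (j : ℕ) (hj : 1 ≤ j) (x : ℝ) (hx : 0 < x) :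
    ∃ y : ℝ, 0 < y ∧ y ^ j = x ∧ psiJ Ψ j x = Ψ y * y ^ (j - 1) := by
  have hj0 : (j : ℝ) ≠ 0 := by exact_mod_cast (by omega : j ≠ 0)
  refine ⟨x ^ ((1 : ℝ) / j), by positivity, ?_, ?_⟩
  · rw [← Real.rpow_natCast, ← Real.rpow_mul hx.le]
    field_simp; simp
  · unfold psiJ
    congr 1
    rw [← Real.rpow_natCast, ← Real.rpow_mul hx.le]
    congr 1
    rw [Nat.cast_sub hj]; push_cast; ring

lemma psiJ_pow (Ψ : ℝ → ℝ) (j : ℕ) (hj : 1 ≤ j) (x : ℝ) (hx : 0 < x) :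
    psiJ Ψ j (x ^ j) = Ψ x * x ^ (j - 1) := by
  obtain ⟨y, hy, hyx, h⟩ := psiJ_eq Ψ j hj (x ^ j) (by positivity)
  have : y = x := (pow_left_inj₀ hy.le hx.le (by omega)).1 hyx
  rw [h, this]

/-- the divisibility step -/
lemma dvd_step (ζ ε : ℝ) (j : ℕ) (hζ : |ζ| ≤ 1 / 2) (Q q : ℕ) (p : ℤ) (hQ : 0 < Q) (hq : 0 < q)
    (hcop : IsCoprime p (q : ℤ)) (hqQ : q ≤ Q) (P : ℕ → ℤ)
    (hpq : |ζ - p / q| ≤ ε / Q) (hε : ε * Q * (j + 1) < 1) (hε2 : ε ≤ 1 / 2)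
    (hP : ∀ i, 1 ≤ i → i ≤ j → |Q * ζ ^ i - P i| ≤ ε) : ∀ i, i ≤ j → q ^ i ∣ Q := by
  have hQR : (1 : ℝ) ≤ Q := by exact_mod_cast hQ
  have hqR : (0 : ℝ) < q := by exact_mod_cast hq
  have hqQR : (q : ℝ) ≤ Q := by exact_mod_cast hqQ
  have hε0 : 0 ≤ ε := by
    have := (abs_nonneg _).trans hpq
    by_contra h
    have : ε / Q < 0 := div_neg_of_neg_of_pos (by linarith) (by linarith)
    linarith
  have hx1 : |(p / q : ℝ)| ≤ 1 := by
    have h1 : ε / Q ≤ 1 / 2 := (div_le_self hε0 hQR).trans hε2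
    have h2 : |(p / q : ℝ)| ≤ |(p / q : ℝ) - ζ| + |ζ| := by
      have := abs_add_le ((p / q : ℝ) - ζ) ζ
      simpa using this
    rw [abs_sub_comm] at h2
    linarith
  intro i
  induction i with
  | zero => simp
  | succ i ih =>
    intro hi
    obtain ⟨m, hm⟩ := ih (by omega)
    have h1 := hP (i + 1) (by omega) hi
    have h2 := pow_sub_one_bd ζ (p / q) (by linarith) hx1 (i + 1)
    have h3 : |(Q : ℝ) * (p / q) ^ (i + 1) - P (i + 1)| ≤ (j + 1) * ε := by
      have e : (Q : ℝ) * (p / q) ^ (i + 1) - P (i + 1) = (Q * ζ ^ (i + 1) - P (i + 1)) -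
        Q * (ζ ^ (i + 1) - (p / q) ^ (i + 1)) := by ring
      rw [e]
      refine (abs_sub _ _).trans ?_
      rw [abs_mul, abs_of_pos (by linarith : (0 : ℝ) < Q)]
      have h4 : (Q : ℝ) * |ζ ^ (i + 1) - (p / q) ^ (i + 1)| ≤ j * ε := by
        calc _ ≤ (Q : ℝ) * (j * (ε / Q)) := by
              gcongr
              refine h2.trans ?_
              gcongr
          _ = _ := by field_simp
      linarith
    have e2 : (Q : ℝ) * (p / q) ^ (i + 1) - P (i + 1) =
        ((m * p ^ (i + 1) - P (i + 1) * q : ℤ) : ℝ) / q := by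
      have : (Q : ℝ) = q ^ i * m := by exact_mod_cast hm
      rw [this, div_pow, pow_succ (q : ℝ)]; push_cast; field_simp
    rw [e2, abs_div, abs_of_pos hqR, div_le_iff₀ hqR] at h3
    have h5 : |((m * p ^ (i + 1) - P (i + 1) * q : ℤ) : ℝ)| < 1 := by
      refine h3.trans_lt (lt_of_le_of_lt ?_ hε)
      calc (j + 1) * ε * q ≤ (j + 1) * ε * (Q : ℝ) := by gcongr
        _ = _ := by ring
    have h6 : (m * p ^ (i + 1) - P (i + 1) * q : ℤ) = 0 := by
      rw [← Int.abs_lt_one_iff]; exact_mod_cast h5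
    have h7 : (q : ℤ) ∣ m := by
      have : IsCoprime (q : ℤ) (p ^ (i + 1)) := (hcop.symm).pow_right
      exact this.dvd_of_dvd_mul_right ⟨P (i + 1), by linarith⟩
    have h8 : q ∣ m := by exact_mod_cast h7
    rw [hm, pow_succ]
    exact mul_dvd_mul_left _ h8

lemma irr_far (ζ : ℝ) (hirr : Irrational ζ) (N : ℕ) : ∃ δ > 0, ∀ (q : ℕ) (p : ℤ), 0 < q → q ≤ N →
    δ ≤ |ζ - p / q| := by
  have hF : (0 : ℝ) < (N.factorial : ℝ) := by exact_mod_cast N.factorial_pos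
  have hirr2 : Irrational ((N.factorial : ℝ) * ζ) := hirr.natCast_mul N.factorial_ne_zero
  refine ⟨|(N.factorial : ℝ) * ζ - round ((N.factorial : ℝ) * ζ)| / N.factorial, ?_, ?_⟩
  · have : (N.factorial : ℝ) * ζ - round ((N.factorial : ℝ) * ζ) ≠ 0 :=
      sub_ne_zero.2 (hirr2.ne_int _)
    have := abs_pos.2 this
    positivity
  · intro q p hq hqN
    obtain ⟨m, hm⟩ := Nat.dvd_factorial hq hqN
    have hqR : (0 : ℝ) < q := by exact_mod_cast hq
    have h := round_le ((N.factorial : ℝ) * ζ) (m * p)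
    rw [div_le_iff₀ hF]
    refine h.trans (le_of_eq ?_)
    have hmR : (N.factorial : ℝ) = q * m := by exact_mod_cast hm
    rw [mul_comm |ζ - p / q|, ← abs_of_pos hF, ← abs_mul, abs_of_pos hF]
    congr 1
    rw [hmR]; push_cast; field_simp

lemma finite_of_bdd (j : ℕ) (ζ : ℝ) (F : ℕ → ℝ) (N : ℕ)
    (h : ∀ (Q : ℕ) (P : Fin j → ℤ), 1 ≤ Q → 
      (∀ i : Fin j, |(Q : ℝ) * ζ ^ ((i : ℕ) + 1) - (P i : ℝ)| ≤ F Q) → Q < N) :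
    {qp : ℕ × (Fin j → ℤ) | 1 ≤ qp.1 ∧
      ∀ i : Fin j, |(qp.1 : ℝ) * ζ ^ ((i : ℕ) + 1) - (qp.2 i : ℝ)| ≤ F qp.1}.Finite := by
  have hfin : (⋃ Q ∈ Set.Iio N, ({Q} : Set ℕ) ×ˢ (Set.univ.pi (fun i : Fin j =>
      Set.Icc ⌈(Q : ℝ) * ζ ^ ((i : ℕ) + 1) - F Q⌉ ⌊(Q : ℝ) * ζ ^ ((i : ℕ) + 1) + F Q⌋))).Finite := by
    apply Set.Finite.biUnion (Set.finite_Iio N)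
    intro Q _
    exact (Set.finite_singleton Q).prod (Set.Finite.pi' fun i => Set.finite_Icc _ _ |>.subset (by
      intro z hz; exact hz)) |>.subset (by
        rintro ⟨u, v⟩ ⟨hu, hv⟩
        exact ⟨hu, fun i => hv i (Set.mem_univ _)⟩)
  refine hfin.subset ?_
  rintro ⟨Q, P⟩ ⟨h1, h2⟩
  simp only [Set.mem_iUnion]
  refine ⟨Q, h Q P h1 h2, rfl, ?_⟩
  intro i _
  have := abs_le.1 (h2 i)
  simp only at this
  exact ⟨Int.ceil_le.2 (by linarith), Int.le_floor.2 (by linarith)⟩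

lemma not_mem_part (k j : ℕ) (hj : 1 ≤ j) (hjk : j ≤ k) (Ψ : ℝ → ℝ)
    (hpos : ∀ x : ℝ, 0 < x → 0 < Ψ x)
    (hdecay : Tendsto (fun x : ℝ => x ^ (2 * k - 1) * Ψ x) atTop (nhds 0))
    (hmono : ∃ X : ℝ, 0 < X ∧ ∀ x y : ℝ, X ≤ x → x ≤ y → Ψ y ≤ Ψ x)
    (ζ c : ℝ) (hc0 : 0 < c) (hc1 : c < 1) (hζ : |ζ| ≤ 1 / 2) (hirr : Irrational ζ)
    (hbad : ∃ N : ℕ, ∀ q : ℕ, N ≤ q → ∀ p : ℤ, c * Ψ q < |q * ζ - p|) :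
    ζ ∉ Kk j (fun q : ℕ => c * psiJ Ψ j q) := by
  rintro ⟨-, hinf⟩
  apply hinf
  obtain ⟨X, hX0, hX⟩ := hmono
  obtain ⟨N0, hN0⟩ := hbad
  obtain ⟨N1, hN1⟩ := exists_nat_gt X
  obtain ⟨δ, hδ, hfar⟩ := irr_far ζ hirr (max N0 N1)
  have hη : (0 : ℝ) < min (1 / (2 * ((k : ℝ) + 1))) δ := by positivity
  obtain ⟨Y, hY⟩ := eventually_atTop.1 (hdecay.eventually (gt_mem_nhds hη))
  obtain ⟨B, hB⟩ := exists_nat_gt (max 1 Y)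
  have hB1 : (1 : ℝ) < B := (le_max_left _ _).trans_lt hB
  have hBY : Y < B := (le_max_right _ _).trans_lt hB
  apply finite_of_bdd j ζ (fun q : ℕ => c * psiJ Ψ j q) (B ^ j)
  intro Q P hQ1 hP
  by_contra hcon
  rw [not_lt] at hcon
  have hQR : (1 : ℝ) ≤ Q := by exact_mod_cast hQ1
  obtain ⟨y, hy0, hyQ, hpsi⟩ := psiJ_eq Ψ j hj Q (by linarith)
  have hyB : (B : ℝ) ≤ y := by
    have : (B : ℝ) ^ j ≤ y ^ j := by rw [hyQ]; exact_mod_cast hcon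
    exact (pow_le_pow_iff_left₀ (by linarith) hy0.le (by omega)).1 this
  simp only [hpsi] at hP
  have hΨy := hpos y hy0
  set ε : ℝ := c * (Ψ y * y ^ (j - 1)) with hεd
  have hε0 : 0 < ε := by positivity
  have hεQ : ε * Q < min (1 / (2 * ((k : ℝ) + 1))) δ := by
    refine lt_of_le_of_lt ?_ (hY y (by linarith))
    calc ε * Q = c * (y ^ (2 * j - 1) * Ψ y) := by
          rw [hεd, ← hyQ, show 2 * j - 1 = (j - 1) + j by omega, pow_add]; ring
      _ ≤ 1 * (y ^ (2 * j - 1) * Ψ y) := by gcongr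
      _ = y ^ (2 * j - 1) * Ψ y := one_mul _
      _ ≤ _ := by
        gcongr
        · linarith
  have hk0 : (0 : ℝ) < k + 1 := by positivity
  have hεQ1 : ε * Q < 1 / (2 * (k + 1)) := hεQ.trans_le (min_le_left _ _)
  have hεQ2 : ε * Q < δ := hεQ.trans_le (min_le_right _ _)
  have hεQ3 : ε * Q * (k + 1) < 1 / 2 := by
    rw [lt_div_iff₀ (by positivity)] at hεQ1; linarith
  have hεQ4 : ε * Q ≤ 1 / 2 := by
    have : (0 : ℝ) ≤ k := Nat.cast_nonneg k
    have : 0 < ε * Q := by positivity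
    nlinarith
  have hεle : ε ≤ ε * Q := le_mul_of_one_le_right hε0.le hQR
  let P' : ℕ → ℤ := fun i => if h : i - 1 < j then P ⟨i - 1, h⟩ else 0
  have hP' : ∀ i, 1 ≤ i → i ≤ j → |Q * ζ ^ i - P' i| ≤ ε := by
    intro i hi1 hi2
    have hlt : i - 1 < j := by omega
    have := hP ⟨i - 1, hlt⟩
    simp only [P', dif_pos hlt]
    rwa [show ((⟨i - 1, hlt⟩ : Fin j) : ℕ) + 1 = i by simp; omega] at this
  have h1 := hP' 1 le_rfl hj
  rw [pow_one] at h1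
  generalize hr : ((P' 1 : ℚ) / (Q : ℚ)) = r
  have hrR : (P' 1 : ℝ) / Q = (r.num : ℝ) / (r.den : ℝ) := by
    rw [← Rat.cast_def, ← hr]; push_cast; rfl
  have hcop : IsCoprime r.num (r.den : ℤ) := by
    rw [Int.isCoprime_iff_gcd_eq_one]; exact r.reduced
  have hden := r.den_pos
  have hdenR : (0 : ℝ) < r.den := by exact_mod_cast hden
  have hcross : P' 1 * (r.den : ℤ) = r.num * Q := by
    rw [div_eq_div_iff (by linarith) hdenR.ne'] at hrR
    exact_mod_cast hrR
  have hdQ : r.den ∣ Q := by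
    have : (r.den : ℤ) ∣ Q := hcop.symm.dvd_of_dvd_mul_left ⟨P' 1, by linarith⟩
    exact_mod_cast this
  have hqQ : r.den ≤ Q := Nat.le_of_dvd hQ1 hdQ
  have hdist : |ζ - r.num / r.den| ≤ ε / Q := by
    have hQ0 : (0 : ℝ) < Q := by linarith
    have e : ζ - P' 1 / Q = (Q * ζ - P' 1) / Q := by field_simp
    rw [← hrR, e, abs_div, abs_of_pos hQ0]
    gcongr
  have hdv := dvd_step ζ ε j hζ Q r.den r.num hQ1 hden hcop hqQ P' hdist (by
    have : (j : ℝ) ≤ k := by exact_mod_cast hjk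
    have : ε * Q * (j + 1) ≤ ε * Q * (k + 1) := by gcongr
    linarith) (by linarith) hP' j le_rfl
  have hbig : max N0 N1 < r.den := by
    by_contra hle
    have := hfar r.den r.num hden (not_lt.1 hle)
    have h3 : ε / Q ≤ ε := div_le_self hε0.le hQR
    linarith
  obtain ⟨M, hM⟩ := hdv
  have hM1 : 1 ≤ M := by
    rcases Nat.eq_zero_or_pos M with h | h
    · rw [h] at hM; omega
    · exact h
  have hMR : (1 : ℝ) ≤ M := by exact_mod_cast hM1
  have hQM : (Q : ℝ) = (r.den : ℝ) ^ j * M := by exact_mod_cast hM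
  have hdy : (r.den : ℝ) ≤ y := by
    have : (r.den : ℝ) ^ j ≤ y ^ j := by
      rw [hyQ, hQM]; exact le_mul_of_one_le_right (by positivity) hMR
    exact (pow_le_pow_iff_left₀ hdenR.le hy0.le (by omega)).1 this
  have hcontr := hN0 r.den (by omega) r.num
  have hΨd : Ψ y ≤ Ψ r.den := by
    apply hX _ _ _ hdy
    have : (N1 : ℝ) < r.den := by exact_mod_cast (by omega : N1 < r.den)
    linarith
  have hfin : |r.den * ζ - r.num| ≤ c * Ψ y := by
    have e : (r.den : ℝ) * ζ - r.num = r.den * (ζ - r.num / r.den) := by field_simp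
    rw [e, abs_mul, abs_of_pos hdenR]
    calc (r.den : ℝ) * |ζ - r.num / r.den| ≤ y * (ε / Q) := by gcongr
      _ = c * Ψ y := by
        rw [hεd, ← hyQ]
        obtain ⟨l, rfl⟩ : ∃ l, j = l + 1 := ⟨j - 1, by omega⟩
        simp only [Nat.add_sub_cancel, pow_succ]
        field_simp
  have : c * Ψ y ≤ c * Ψ r.den := by gcongr
  linarith

lemma mem_part (j : ℕ) (hj : 1 ≤ j) (Ψ : ℝ → ℝ) (ζ : ℝ) (hζ : |ζ| ≤ 1 / 2)
    (htr : ¬ IsAlgebraic ℤ ζ)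
    (hgood : ∀ N : ℕ, ∃ (q : ℕ) (p : ℤ), N < q ∧ |(p / q : ℝ)| ≤ 1 / 2 ∧ |q * ζ - p| ≤ Ψ q) :
    ζ ∈ Kk j (fun q : ℕ => psiJ Ψ j q) := by
  refine ⟨fun P hP _ h0 => htr ⟨P, hP, h0⟩, ?_⟩
  apply Set.Infinite.of_image Prod.fst
  apply Set.infinite_of_forall_exists_gt
  intro N
  obtain ⟨q, p, hq, hpq, h⟩ := hgood N
  have hqR : (0 : ℝ) < q := by exact_mod_cast (by omega : 0 < q)
  refine ⟨q ^ j, ⟨(q ^ j, fun i => q ^ (j - (i + 1)) * p ^ ((i : ℕ) + 1)), ⟨?_, ?_⟩, rfl⟩,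
    lt_of_lt_of_le hq (Nat.le_self_pow (by omega) q)⟩
  · exact Nat.one_le_pow _ _ (by omega)
  · intro i
    have hi := i.2
    have hc : (((q ^ j : ℕ)) : ℝ) = (q : ℝ) ^ j := by push_cast; rfl
    simp only [hc]
    rw [psiJ_pow Ψ j hj q hqR]
    push_cast
    have e : (q : ℝ) ^ j * ζ ^ ((i : ℕ) + 1) - q ^ (j - (i + 1)) * p ^ ((i : ℕ) + 1) =
        q ^ j * (ζ ^ ((i : ℕ) + 1) - (p / q) ^ ((i : ℕ) + 1)) := by
      have : (q : ℝ) ^ j = q ^ (j - ((i : ℕ) + 1)) * q ^ ((i : ℕ) + 1) := by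
        rw [← pow_add]; congr 1; omega
      rw [mul_sub, div_pow, this]; field_simp
    rw [e, abs_mul, abs_of_pos (by positivity)]
    have h2 := pow_sub_half ζ (p / q) hζ hpq i
    calc (q : ℝ) ^ j * _ ≤ (q : ℝ) ^ j * |ζ - p / q| := by gcongr
      _ = |q * ζ - p| * q ^ (j - 1) := by
        have e3 : (q : ℝ) * ζ - p = q * (ζ - p / q) := by field_simp
        rw [e3, abs_mul, abs_of_pos hqR]
        obtain ⟨l, rfl⟩ : ∃ l, j = l + 1 := ⟨j - 1, by omega⟩
        simp only [Nat.add_sub_cancel, pow_succ]; ring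
      _ ≤ _ := by gcongr

/-- If `Ψ` is admissible of degree `k`, then for every non-empty open interval
`(a, b) ⊆ (-1/2, 1/2)` the set `⋂_{1≤j≤k} (𝒦_j(Ψ_j) \ ⋃_{0<c<1} 𝒦_j(cΨ_j)) ∩ (a, b)`
is uncountable. -/
theorem admissible_intersection_uncountable (k : ℕ) (hk : 1 ≤ k) (Ψ : ℝ → ℝ)
    (hpos : ∀ x : ℝ, 0 < x → 0 < Ψ x)
    (hdecay : Tendsto (fun x : ℝ => x ^ (2 * k - 1) * Ψ x) atTop (nhds 0))
    (hB0 : ∃ X : ℝ, 0 < X ∧ ∀ x y : ℝ, X ≤ x → x ≤ y → (y / x) ^ (k - 1) ≤ Ψ x / Ψ y)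
    (a b : ℝ) (ha : -(1 / 2) ≤ a) (hab : a < b) (hb : b ≤ 1 / 2) :
    ¬ ((⋂ j ∈ Icc 1 k,
          (Kk j (fun q : ℕ => psiJ Ψ j q) \
            ⋃ c ∈ Ioo (0 : ℝ) 1, Kk j (fun q : ℕ => c * psiJ Ψ j q))) ∩
        Ioo a b).Countable := by
  intro hcount
  have hc2 := hcount.union (Algebraic.countable ℤ ℝ)
  obtain ⟨f, hf⟩ := Set.countable_iff_exists_subset_range.1 hc2
  have hmono : ∃ X : ℝ, 0 < X ∧ ∀ x y : ℝ, X ≤ x → x ≤ y → Ψ y ≤ Ψ x := by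
    obtain ⟨X, hX0, hX⟩ := hB0
    refine ⟨X, hX0, fun x y hx hxy => ?_⟩
    have h := hX x y hx hxy
    have hx0 : 0 < x := by linarith
    have h1 : 1 ≤ (y / x) ^ (k - 1) := one_le_pow₀ ((one_le_div hx0).2 hxy)
    exact (one_le_div (hpos y (by linarith))).1 (h1.trans h)
  have hdec : Tendsto (fun x : ℝ => x * Ψ x) atTop (nhds 0) := by
    refine squeeze_zero' ?_ ?_ hdecay
    · filter_upwards [eventually_gt_atTop 0] with x hx
      exact (mul_pos hx (hpos x hx)).le
    · filter_upwards [eventually_ge_atTop 1] with x hx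
      have := hpos x (by linarith)
      gcongr
      exact le_self_pow₀ hx (by omega)
  obtain ⟨ζ, hζI, hζf, hgood, hbad⟩ := core Ψ hpos hdec hmono a b hab f
  have hhalf : ∀ z ∈ Ioo a b, |z| ≤ 1 / 2 := fun z hz =>
    abs_le.2 ⟨by linarith [hz.1], by linarith [hz.2]⟩
  have hnot : ∀ s : ζ ∈ range f, False := by
    rintro ⟨n, hn⟩; exact hζf n hn.symm
  have htr : ¬ IsAlgebraic ℤ ζ := fun h => hnot (hf (Or.inr h))
  have hirr : Irrational ζ := by
    rintro ⟨r, rfl⟩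
    exact htr ((IsFractionRing.isAlgebraic_iff ℤ ℚ ℝ).mpr (isAlgebraic_algebraMap (A := ℝ) r))
  apply hnot
  apply hf
  left
  refine ⟨?_, hζI⟩
  simp only [mem_iInter]
  intro j hj
  refine ⟨mem_part j hj.1 Ψ ζ (hhalf ζ hζI) htr ?_, ?_⟩
  · intro N
    obtain ⟨q, p, h1, h2, h3⟩ := hgood N
    exact ⟨q, p, h1, hhalf _ h2, h3⟩
  · simp only [mem_iUnion, not_exists]
    intro c hc
    exact not_mem_part k j hj.1 hj.2 Ψ hpos hdecay hmono ζ c hc.1 hc.2 (hhalf ζ hζI) hirr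
      (hbad c hc.1 hc.2)
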